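/- Fix ρ with 0 < |ρ| < 1 and c > 0, and let W, Z be independent standard normal. Define T'(γ) as above. For 1/2 ≤ v < 1 and q = Φ^{-1}(1−v), there exists γ ∈ ℝ such that Pr(T'(γ) ≤ q) > Φ(q), i.e., the (1−v)-quantile of T'(γ) is strictly smaller than Φ^{-1}(1−v) for some γ. -/

import Mathlib

open MeasureTheory ProbabilityTheory Set

noncomputable def stdPhi (u : ℝ) : ℝ := (Real.sqrt (2 * Real.pi))⁻¹ * Real.exp (-(u ^ 2) / 2)

noncomputable def stdCdf (x : ℝ) : ℝ := ∫ u in Iic x, stdPhi u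

noncomputable def Tstat (ρ c γ : ℝ) (p : ℝ × ℝ) : ℝ :=
  if c < |p.2 + γ| then Real.sqrt (1 - ρ ^ 2) * p.1 + ρ * p.2
  else p.1 - ρ * γ / Real.sqrt (1 - ρ ^ 2)

noncomputable def stdNormal2 : Measure (ℝ × ℝ) :=
  (gaussianReal 0 1).prod (gaussianReal 0 1)

open Filter
open scoped NNReal

/-!
Write `s = √(1 - ρ ^ 2)`. If `T'` used its first branch everywhere, `T' ≤ q` would have probability
`Φ(q)`, since `s W + ρ Z` is standard normal. Conditioning on `Z` and putting `u = Z + γ ∼ N(γ, 1)`,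
the second branch changes this probability by the integral over `|u| ≤ c` of
`Φ(m) - Φ(m - (ρ u - b) / s)`, where `m = q + ρ γ / s` and `b = q (1 - s)`. As `Φ` is concave on
`[0, ∞)`, once `m` and `m - (ρ u - b) / s` are nonnegative the integrand is at least
`φ(m) / s * (ρ u - b)`. Now take `γ = t ρ`: the law `N(t ρ, 1)` is the exponential tilt of `N(0, 1)`
along `ρ u`, so for large `t` its mass on `|u| ≤ c` concentrates where `ρ u` is close to `|ρ| c`,
and the integral of `ρ u - b` is positive as soon as `b < |ρ| c`. For `q ≤ 0` this holds because
`b ≤ 0`.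
-/

lemma intervalIntegral_le_mul_sub_of_antitoneOn {f : ℝ → ℝ} {a b : ℝ}
    (hf : AntitoneOn f (uIcc a b)) : ∫ x in a..b, f x ≤ f a * (b - a) := by
  have hint : IntervalIntegrable f volume a b := hf.intervalIntegrable
  have hconst : ∫ _ in a..b, f a = f a * (b - a) := by
    rw [intervalIntegral.integral_const, smul_eq_mul, mul_comm]
  rw [← hconst]
  rcases le_total a b with h | h
  · exact intervalIntegral.integral_mono_on h hint intervalIntegrable_const
      fun x hx => hf left_mem_uIcc (uIcc_of_le h ▸ hx) hx.1
  · rw [intervalIntegral.integral_symm, intervalIntegral.integral_symm b a, neg_le_neg_iff]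
    exact intervalIntegral.integral_mono_on h intervalIntegrable_const hint.symm
      fun x hx => hf (uIcc_of_ge h ▸ hx) left_mem_uIcc hx.2

lemma mul_posPart_sq_sub_one_le_mul_exp {t : ℝ} (ht : 1 ≤ t) (x : ℝ) :
    t * x⁺ ^ 2 - 1 ≤ x * Real.exp (t * x) := by
  rcases le_total 0 x with hx | hx
  · rw [posPart_of_nonneg hx]
    nlinarith [mul_le_mul_of_nonneg_left (Real.add_one_le_exp (t * x)) hx]
  · have hbound : -(t * x) * Real.exp (t * x) ≤ 1 := by
      simpa using (Real.mul_exp_neg_le_exp_neg_one (-(t * x))).trans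
        (Real.exp_le_one_iff.2 (by simp))
    have hle : t * (x * Real.exp (t * x)) ≤ x * Real.exp (t * x) :=
      mul_le_of_one_le_left (mul_nonpos_of_nonpos_of_nonneg hx (Real.exp_nonneg _)) ht
    rw [posPart_of_nonpos hx]
    linarith

lemma gaussianReal_tilted_const_mul (m : ℝ) (v : ℝ≥0) (t : ℝ) :
    (gaussianReal m v).tilted (t * ·) = gaussianReal (m + v * t) v := by
  have := isProbabilityMeasure_tilted (integrable_exp_mul_gaussianReal (μ := m) (v := v) t)
  refine Measure.ext_of_complexMGF_id_eq (funext fun z => ?_)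
  have hmgf : (mgf id (gaussianReal m v) t : ℂ) = Complex.exp (m * t + v * t ^ 2 / 2) := by
    rw [mgf_id_gaussianReal]
    push_cast
    rfl
  calc complexMGF id ((gaussianReal m v).tilted (t * ·)) z
      = ∫ x, (Real.exp (t * x) / mgf id (gaussianReal m v) t) • Complex.exp (z * x)
          ∂gaussianReal m v := integral_tilted_mul_eq_mgf (X := id) _
    _ = complexMGF id (gaussianReal m v) (t + z) / mgf id (gaussianReal m v) t := by
      rw [complexMGF, ← integral_div]
      congr with x
      rw [Complex.real_smul, add_mul, Complex.exp_add]
      push_cast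
      simp only [id]
      ring
    _ = complexMGF id (gaussianReal (m + v * t) v) z := by
      rw [hmgf, complexMGF_id_gaussianReal, complexMGF_id_gaussianReal, ← Complex.exp_sub]
      push_cast
      ring_nf

lemma eventually_integral_mul_exp_mul_pos {Ω : Type*} {mΩ : MeasurableSpace Ω} {μ : Measure Ω}
    [IsFiniteMeasure μ] {X : Ω → ℝ} (hX : ∀ t, Integrable (fun ω => X ω * Real.exp (t * X ω)) μ)
    (hpos : 0 < μ {ω | 0 < X ω}) :
    ∀ᶠ t in atTop, 0 < ∫ ω, X ω * Real.exp (t * X ω) ∂μ := by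
  have hsm : AEStronglyMeasurable X μ := by simpa using (hX 0).aestronglyMeasurable
  have hsq : Integrable (fun ω => (X ω)⁺ ^ 2) μ := by
    refine ((hX 1).add (integrable_const 1)).mono'
      ((by fun_prop : Continuous fun x : ℝ => x⁺ ^ 2).comp_aestronglyMeasurable hsm) ?_
    filter_upwards with ω
    have := mul_posPart_sq_sub_one_le_mul_exp le_rfl (X ω)
    simp only [Real.norm_of_nonneg (sq_nonneg _), Pi.add_apply]
    linarith
  have hsq_pos : 0 < ∫ ω, (X ω)⁺ ^ 2 ∂μ := by
    rw [integral_pos_iff_support_of_nonneg (fun ω => sq_nonneg _) hsq]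
    convert hpos using 2
    ext ω
    simp [Function.mem_support]
  have hlarge : ∀ᶠ t : ℝ in atTop, μ.real univ < t * ∫ ω, (X ω)⁺ ^ 2 ∂μ :=
    (tendsto_id.atTop_mul_const hsq_pos).eventually_gt_atTop _
  filter_upwards [hlarge, eventually_ge_atTop 1] with t ht ht1
  calc 0 < t * ∫ ω, (X ω)⁺ ^ 2 ∂μ - μ.real univ := sub_pos.2 ht
    _ = ∫ ω, (t * (X ω)⁺ ^ 2 - 1) ∂μ := by
      rw [integral_sub (hsq.const_mul t) (integrable_const 1), integral_const_mul, integral_const,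
        smul_eq_mul, mul_one]
    _ ≤ ∫ ω, X ω * Real.exp (t * X ω) ∂μ :=
      integral_mono ((hsq.const_mul t).sub (integrable_const 1)) (hX t)
        fun ω => mul_posPart_sq_sub_one_le_mul_exp ht1 (X ω)

lemma integrable_cdf_comp {Ω : Type*} {mΩ : MeasurableSpace Ω} (μ : Measure ℝ) {ν : Measure Ω}
    [IsFiniteMeasure ν] {F : Ω → ℝ} (hF : AEMeasurable F ν) :
    Integrable (fun ω => cdf μ (F ω)) ν := by
  refine .of_bound ((monotone_cdf μ).measurable.comp_aemeasurable hF).aestronglyMeasurable 1 ?_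
  filter_upwards with ω
  rw [Real.norm_of_nonneg (cdf_nonneg μ _)]
  exact cdf_le_one μ _

lemma measureReal_prod_setOf_fst_le {Ω : Type*} {mΩ : MeasurableSpace Ω} (μ : Measure ℝ)
    [IsProbabilityMeasure μ] (ν : Measure Ω) [IsFiniteMeasure ν] {F : Ω → ℝ} (hF : Measurable F) :
    (μ.prod ν).real {p | p.1 ≤ F p.2} = ∫ ω, cdf μ (F ω) ∂ν := by
  have hmeas : MeasurableSet {p : ℝ × Ω | p.1 ≤ F p.2} :=
    measurableSet_le (by fun_prop) (by fun_prop)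
  rw [measureReal_def, Measure.prod_apply_symm hmeas,
    integral_eq_lintegral_of_nonneg_ae (ae_of_all _ fun _ => cdf_nonneg μ _)
    (integrable_cdf_comp μ hF.aemeasurable).aestronglyMeasurable]
  simp only [ofReal_cdf]
  rfl

lemma gaussianReal_prod_map_mul_fst_add_mul_snd (m₁ m₂ : ℝ) (v₁ v₂ : ℝ≥0) (a b : ℝ) :
    ((gaussianReal m₁ v₁).prod (gaussianReal m₂ v₂)).map (fun p => a * p.1 + b * p.2)
      = gaussianReal (a * m₁ + b * m₂)
          (.mk (a ^ 2) (sq_nonneg _) * v₁ + .mk (b ^ 2) (sq_nonneg _) * v₂) := by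
  have hfst : HasLaw Prod.fst (gaussianReal m₁ v₁)
      ((gaussianReal m₁ v₁).prod (gaussianReal m₂ v₂)) :=
    ⟨by fun_prop, Measure.fst_prod⟩
  have hsnd : HasLaw Prod.snd (gaussianReal m₂ v₂)
      ((gaussianReal m₁ v₁).prod (gaussianReal m₂ v₂)) :=
    ⟨by fun_prop, Measure.snd_prod⟩
  exact gaussianReal_add_gaussianReal_of_indepFun
    (indepFun_prod (measurable_const_mul a) (measurable_const_mul b))
    (gaussianReal_const_mul hfst a).map_eq (gaussianReal_const_mul hsnd b).map_eq

lemma eventually_setIntegral_mul_sub_gaussianReal_pos {m : ℝ} {v : ℝ≥0} {K : Set ℝ}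
    (hK : IsCompact K) {a b : ℝ} (hpos : 0 < gaussianReal m v (K ∩ {u | b < a * u})) :
    ∀ᶠ t in atTop, 0 < ∫ u in K, (a * u - b) ∂gaussianReal (m + v * (t * a)) v := by
  have htilt : ∀ᶠ t in atTop,
      0 < ∫ u in K, (a * u - b) * Real.exp (t * (a * u - b)) ∂gaussianReal m v := by
    refine eventually_integral_mul_exp_mul_pos (fun t => ?_) ?_
    · exact ContinuousOn.integrableOn_compact hK (by fun_prop)
    · simpa only [sub_pos, Measure.restrict_apply' hK.measurableSet, inter_comm] using hpos
  filter_upwards [htilt] with t ht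
  set M := ∫ x, Real.exp (t * a * x) ∂gaussianReal m v
  have hM : 0 < M := integral_exp_pos (integrable_exp_mul_gaussianReal _)
  have hfactor (u : ℝ) : (Real.exp (t * a * u) / M) • (a * u - b) =
      Real.exp (t * b) / M * ((a * u - b) * Real.exp (t * (a * u - b))) := by
    rw [show t * a * u = t * b + t * (a * u - b) by ring, Real.exp_add, smul_eq_mul]
    ring
  rw [← gaussianReal_tilted_const_mul, setIntegral_tilted]
  simp only [M, hfactor, integral_const_mul]
  exact mul_pos (div_pos (Real.exp_pos _) hM) ht

lemma gaussianReal_Icc_inter_setOf_lt_mul_pos (m : ℝ) {v : ℝ≥0} (hv : v ≠ 0) {a b c : ℝ}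
    (hc : 0 < c) (hb : b < |a| * c) :
    0 < gaussianReal m v (Icc (-c) c ∩ {u | b < a * u}) := by
  have : (gaussianReal m v).IsOpenPosMeasure :=
    (gaussianReal_absolutelyContinuous' m hv).isOpenPosMeasure
  obtain ⟨u, hu, hbu⟩ : ∃ u ∈ closure (Ioo (-c) c), b < a * u := by
    rw [closure_Ioo (by linarith)]
    rcases abs_choice a with ha | ha
    · exact ⟨c, right_mem_Icc.2 (by linarith), ha ▸ hb⟩
    · exact ⟨-c, left_mem_Icc.2 (by linarith), by rwa [mul_neg, ← neg_mul, ← ha]⟩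
  have hopen : IsOpen {u | b < a * u} := isOpen_lt (by fun_prop) (by fun_prop)
  have hne : (Ioo (-c) c ∩ {u | b < a * u}).Nonempty :=
    inter_comm _ _ ▸ mem_closure_iff.1 hu _ hopen hbu
  calc 0 < gaussianReal m v (Ioo (-c) c ∩ {u | b < a * u}) :=
        (isOpen_Ioo.inter hopen).measure_pos _ hne
    _ ≤ gaussianReal m v (Icc (-c) c ∩ {u | b < a * u}) := by gcongr; exact Ioo_subset_Icc_self

lemma stdPhi_eq_gaussianPDFReal : stdPhi = gaussianPDFReal 0 1 := by
  funext u
  simp [stdPhi, gaussianPDFReal]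

lemma stdPhi_pos (u : ℝ) : 0 < stdPhi u := by
  unfold stdPhi
  positivity

lemma stdPhi_neg (u : ℝ) : stdPhi (-u) = stdPhi u := by
  simp [stdPhi]

lemma antitoneOn_stdPhi : AntitoneOn stdPhi (Ici 0) := by
  intro a ha b _ hab
  have ha : 0 ≤ a := ha
  unfold stdPhi
  gcongr

lemma integrable_stdPhi : Integrable stdPhi :=
  stdPhi_eq_gaussianPDFReal ▸ integrable_gaussianPDFReal 0 1

lemma stdCdf_eq_cdf : stdCdf = cdf (gaussianReal 0 1) := by
  funext x
  rw [cdf_eq_real, measureReal_def, gaussianReal_apply_eq_integral 0 one_ne_zero,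
    ENNReal.toReal_ofReal (integral_nonneg fun u => gaussianPDFReal_nonneg 0 1 u), stdCdf,
    stdPhi_eq_gaussianPDFReal]

lemma stdCdf_sub_stdCdf (a b : ℝ) : stdCdf b - stdCdf a = ∫ u in a..b, stdPhi u :=
  intervalIntegral.integral_Iic_sub_Iic integrable_stdPhi.integrableOn
    integrable_stdPhi.integrableOn

lemma strictMono_stdCdf : StrictMono stdCdf := fun a b hab => by
  rw [← sub_pos, stdCdf_sub_stdCdf]
  exact intervalIntegral.intervalIntegral_pos_of_pos integrable_stdPhi.intervalIntegrable
    stdPhi_pos hab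

lemma stdCdf_zero : stdCdf 0 = 1 / 2 := by
  have hsymm : ∫ u in Iic 0, stdPhi u = ∫ u in Ioi 0, stdPhi u := by
    simpa only [stdPhi_neg, neg_zero] using integral_comp_neg_Iic 0 stdPhi
  have htotal : (∫ u in Iic 0, stdPhi u) + ∫ u in Ioi 0, stdPhi u = 1 := by
    rw [intervalIntegral.integral_Iic_add_Ioi integrable_stdPhi.integrableOn
      integrable_stdPhi.integrableOn, stdPhi_eq_gaussianPDFReal,
      integral_gaussianPDFReal_eq_one 0 one_ne_zero]
  unfold stdCdf
  linarith

lemma stdCdf_le_tangent {m x : ℝ} (hm : 0 ≤ m) (hx : 0 ≤ x) :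
    stdCdf x ≤ stdCdf m + stdPhi m * (x - m) := by
  rw [← sub_le_iff_le_add', stdCdf_sub_stdCdf]
  exact intervalIntegral_le_mul_sub_of_antitoneOn <|
    antitoneOn_stdPhi.mono (ordConnected_Ici.uIcc_subset hm hx)

lemma integrable_stdCdf_comp {Ω : Type*} {_ : MeasurableSpace Ω} {ν : Measure Ω}
    [IsFiniteMeasure ν] {F : Ω → ℝ} (hF : AEMeasurable F ν) :
    Integrable (fun ω => stdCdf (F ω)) ν :=
  stdCdf_eq_cdf ▸ integrable_cdf_comp _ hF

lemma stdNormal2_real_setOf_fst_le {F : ℝ → ℝ} (hF : Measurable F) :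
    stdNormal2.real {p | p.1 ≤ F p.2} = ∫ z, stdCdf (F z) ∂gaussianReal 0 1 :=
  stdCdf_eq_cdf ▸ measureReal_prod_setOf_fst_le _ _ hF

lemma sqrt_one_sub_sq_pos {ρ : ℝ} (hρ : |ρ| < 1) : 0 < √(1 - ρ ^ 2) :=
  Real.sqrt_pos.2 (sub_pos.2 ((sq_lt_one_iff_abs_lt_one ρ).2 hρ))

lemma stdNormal2_real_setOf_mul_fst_add_mul_snd_le {a b : ℝ} (h : a ^ 2 + b ^ 2 = 1) (q : ℝ) :
    stdNormal2.real {p | a * p.1 + b * p.2 ≤ q} = stdCdf q := by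
  have hmap : stdNormal2.map (fun p => a * p.1 + b * p.2) = gaussianReal 0 1 := by
    rw [stdNormal2, gaussianReal_prod_map_mul_fst_add_mul_snd]
    congr 1
    · simp
    · exact NNReal.eq (by simp [h])
  rw [stdCdf_eq_cdf, cdf_eq_real, ← hmap, map_measureReal_apply (by fun_prop) measurableSet_Iic]
  rfl

lemma integral_stdCdf_sub_mul_div_sqrt {ρ : ℝ} (hρ : |ρ| < 1) (q : ℝ) :
    ∫ z, stdCdf ((q - ρ * z) / √(1 - ρ ^ 2)) ∂gaussianReal 0 1 = stdCdf q := by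
  have hs := sqrt_one_sub_sq_pos hρ
  rw [← stdNormal2_real_setOf_fst_le (by fun_prop),
    ← stdNormal2_real_setOf_mul_fst_add_mul_snd_le (a := √(1 - ρ ^ 2)) (b := ρ)
      (by rw [Real.sq_sqrt (Real.sqrt_pos.1 hs).le, sub_add_cancel])]
  simp only [le_div_iff₀ hs, le_sub_iff_add_le, mul_comm]

lemma Tstat_le_iff {ρ : ℝ} (hρ : |ρ| < 1) (c γ q : ℝ) (p : ℝ × ℝ) :
    Tstat ρ c γ p ≤ q ↔ p.1 ≤ if c < |p.2 + γ| then (q - ρ * p.2) / √(1 - ρ ^ 2)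
      else q + ρ * γ / √(1 - ρ ^ 2) := by
  unfold Tstat
  split_ifs
  · rw [le_div_iff₀ (sqrt_one_sub_sq_pos hρ), le_sub_iff_add_le, mul_comm p.1]
  · exact sub_le_iff_le_add

lemma stdNormal2_real_setOf_Tstat_le_sub_stdCdf {ρ : ℝ} (hρ : |ρ| < 1) (c γ q : ℝ) :
    stdNormal2.real {p | Tstat ρ c γ p ≤ q} - stdCdf q = ∫ u in Icc (-c) c,
      (stdCdf (q + ρ * γ / √(1 - ρ ^ 2)) - stdCdf ((q + ρ * γ - ρ * u) / √(1 - ρ ^ 2)))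
        ∂gaussianReal γ 1 := by
  set s := √(1 - ρ ^ 2)
  have hF : Measurable fun z => if c < |z + γ| then (q - ρ * z) / s else q + ρ * γ / s :=
    .ite (measurableSet_lt (by fun_prop) (by fun_prop)) (by fun_prop) (by fun_prop)
  have hG : Measurable fun z => (q - ρ * z) / s := by fun_prop
  have hshift : gaussianReal γ 1 = (gaussianReal 0 1).map (· + γ) := by
    rw [gaussianReal_map_add_const, zero_add]
  simp only [Tstat_le_iff hρ]
  rw [stdNormal2_real_setOf_fst_le hF, ← integral_stdCdf_sub_mul_div_sqrt hρ q,
    ← integral_sub (integrable_stdCdf_comp hF.aemeasurable)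
      (integrable_stdCdf_comp hG.aemeasurable),
    ← integral_indicator measurableSet_Icc, hshift, (measurableEmbedding_addRight γ).integral_map]
  congr with z
  rcases lt_or_ge c |z + γ| with hz | hz
  · rw [if_pos hz, sub_self, indicator_of_notMem (s := Icc (-c) c) (mt abs_le.2 hz.not_ge)]
  · rw [if_neg hz.not_gt, indicator_of_mem (s := Icc (-c) c) (abs_le.1 hz),
      show q + ρ * γ - ρ * (z + γ) = q - ρ * z by ring]

lemma stdCdf_lt_stdNormal2_real_setOf_Tstat_le {ρ c γ q : ℝ} (hρ : |ρ| < 1)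
    (hm : 0 ≤ q + ρ * γ / √(1 - ρ ^ 2)) (hc : |ρ| * c ≤ q + ρ * γ)
    (hmean : 0 < ∫ u in Icc (-c) c, (ρ * u - q * (1 - √(1 - ρ ^ 2))) ∂gaussianReal γ 1) :
    stdCdf q < stdNormal2.real {p | Tstat ρ c γ p ≤ q} := by
  have hs := sqrt_one_sub_sq_pos hρ
  rw [← sub_pos, stdNormal2_real_setOf_Tstat_le_sub_stdCdf hρ]
  set s := √(1 - ρ ^ 2)
  set m := q + ρ * γ / s
  have htangent (u : ℝ) (hu : u ∈ Icc (-c) c) : stdPhi m / s * (ρ * u - q * (1 - s)) ≤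
      stdCdf m - stdCdf ((q + ρ * γ - ρ * u) / s) := by
    have hρu : ρ * u ≤ |ρ| * c := calc
      ρ * u ≤ |ρ * u| := le_abs_self _
      _ = |ρ| * |u| := abs_mul _ _
      _ ≤ |ρ| * c := by gcongr; exact abs_le.2 hu
    have hgap : (q + ρ * γ - ρ * u) / s - m = -((ρ * u - q * (1 - s)) / s) := by
      simp only [m]
      field_simp
      ring
    have := stdCdf_le_tangent hm (div_nonneg (by linarith) hs.le : 0 ≤ (q + ρ * γ - ρ * u) / s)
    rw [hgap] at this
    linarith [div_mul_comm (stdPhi m) s (ρ * u - q * (1 - s))]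
  calc 0 < stdPhi m / s * ∫ u in Icc (-c) c, (ρ * u - q * (1 - s)) ∂gaussianReal γ 1 :=
        mul_pos (div_pos (stdPhi_pos m) hs) hmean
    _ = ∫ u in Icc (-c) c, stdPhi m / s * (ρ * u - q * (1 - s)) ∂gaussianReal γ 1 :=
        (integral_const_mul _ _).symm
    _ ≤ ∫ u in Icc (-c) c, (stdCdf m - stdCdf ((q + ρ * γ - ρ * u) / s)) ∂gaussianReal γ 1 :=
        setIntegral_mono_on (ContinuousOn.integrableOn_compact isCompact_Icc (by fun_prop))
          ((integrable_const _).sub (integrable_stdCdf_comp (by fun_prop))) measurableSet_Icc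
          htangent

theorem stmt_10_general (ρ c q : ℝ) (hρ : |ρ| < 1) (hc : 0 < c)
    (hq : q * (1 - √(1 - ρ ^ 2)) < |ρ| * c) :
    ∃ γ : ℝ, ENNReal.ofReal (stdCdf q) < stdNormal2 {p | Tstat ρ c γ p ≤ q} := by
  have hs := sqrt_one_sub_sq_pos hρ
  have hρ2 : 0 < ρ ^ 2 := by
    refine sq_pos_of_ne_zero fun h => ?_
    simp [h] at hq
  have hmean_ev := eventually_setIntegral_mul_sub_gaussianReal_pos isCompact_Icc
    (gaussianReal_Icc_inter_setOf_lt_mul_pos 0 one_ne_zero hc hq)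
  simp only [NNReal.coe_one, one_mul, zero_add] at hmean_ev
  have hγ : Tendsto (fun t : ℝ => ρ * (t * ρ)) atTop atTop := by
    simpa only [id, sq, mul_left_comm] using tendsto_id.atTop_mul_const hρ2
  have hm_tendsto := tendsto_atTop_add_const_left _ q (hγ.atTop_div_const hs)
  obtain ⟨t, hmean, hm, hle⟩ := (hmean_ev.and ((hm_tendsto.eventually_ge_atTop 0).and
    ((tendsto_atTop_add_const_left _ q hγ).eventually_ge_atTop (|ρ| * c)))).exists
  have : IsProbabilityMeasure stdNormal2 := by unfold stdNormal2; infer_instance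
  refine ⟨t * ρ, (ENNReal.ofReal_lt_iff_lt_toReal ?_ (measure_ne_top _ _)).2
    (stdCdf_lt_stdNormal2_real_setOf_Tstat_le hρ hm hle hmean)⟩
  exact stdCdf_eq_cdf ▸ cdf_nonneg _ q

theorem stmt_10 (ρ c : ℝ) (hρ0 : ρ ≠ 0) (hρ1 : |ρ| < 1) (hc : 0 < c)
    (v q : ℝ) (hv0 : 1 / 2 ≤ v) (hv1 : v < 1) (hq : stdCdf q = 1 - v) :
    ∃ γ : ℝ, ENNReal.ofReal (stdCdf q) < stdNormal2 {p | Tstat ρ c γ p ≤ q} := by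
  have hq0 : q ≤ 0 := strictMono_stdCdf.le_iff_le.1 (by rw [stdCdf_zero]; linarith)
  have hs : √(1 - ρ ^ 2) ≤ 1 := Real.sqrt_le_one.2 (by linarith [sq_nonneg ρ])
  exact stmt_10_general ρ c q hρ1 hc <|
    (mul_nonpos_of_nonpos_of_nonneg hq0 (sub_nonneg.2 hs)).trans_lt
      (mul_pos (abs_pos.2 hρ0) hc)
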